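/- (Lemma 2: 2n weight-one checks detect all errors.) Let n : ℕ. For k : Fin n define e(k,m) : Fin n → Fin 4 to equal m at index k and 0 elsewhere, and set X_k = P_{e(k,1)}, Z_k = P_{e(k,3)}. Then for every complex matrix E indexed by (Fin n → Fin 2), folding the 2n check maps over all k — i.e. (List.finRange n).foldl (fun M k => T_{Z_k}(T_{X_k}(M))) E with T_Q(M) = (Q * M * Q + M)/2 — equals ((trace E)/2^n) • 1. That is, the 2n distinct weight-one checks {X_k, Z_k : k < n} reduce every Kraus operator to a scalar multiple of the identity. -/

import Mathlib

open Matrix Complex Kronecker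

noncomputable def pauli : Fin 4 → Matrix (Fin 2) (Fin 2) ℂ
  | 0 => !![1, 0; 0, 1]
  | 1 => !![0, 1; 1, 0]
  | 2 => !![0, -Complex.I; Complex.I, 0]
  | 3 => !![1, 0; 0, -1]

noncomputable def PauliString {n : ℕ} (a : Fin n → Fin 4) :
    Matrix (Fin n → Fin 2) (Fin n → Fin 2) ℂ :=
  Matrix.of fun f g => ∏ i, pauli (a i) (f i) (g i)

/-!
Each check map preserves the trace, because a Pauli string squares to the identity, and sends every
matrix to one commuting with its check. Since any two Pauli strings commute up to a sign, and a
check enters its map twice, later checks do not destroy commutation with earlier ones. After all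
checks the matrix commutes with every `X_k = PauliString (Pi.single k 1)` and
`Z_k = PauliString (Pi.single k 3)`: the `Z_k` force it to be diagonal, and the `X_k`, which act
transitively on the computational basis, force its diagonal to be constant.
-/

section CheckMap

variable {ι K : Type*} [Fintype ι] [Field K]

/-- One layer of Pauli check sandwiching with check `Q`, postselected on ancilla outcome `0`. It is
defined for every square matrix `Q`; the checks of interest satisfy `Q * Q = 1`. -/
def checkMap (Q M : Matrix ι ι K) : Matrix ι ι K :=
  ((1 : K) / 2) • (Q * M * Q + M)

theorem commute_checkMap {Q R M : Matrix ι ι K} {c : ℤˣ}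
    (hQ : SemiconjBy Q R (c • R)) (hM : Commute M R) : Commute (checkMap Q M) R := by
  have hQ' : SemiconjBy Q (c • R) R := by
    simp only [SemiconjBy, mul_smul_comm, hQ.eq, smul_mul_assoc, smul_smul, Int.units_mul_self,
      one_smul]
  have hM' : SemiconjBy M (c • R) (c • R) := hM.smul_right c
  exact (((hQ'.mul_left hM').mul_left hQ).add_left hM).smul_left _

variable [DecidableEq ι]

theorem trace_checkMap [NeZero (2 : K)] {Q : Matrix ι ι K} (hQ : Q * Q = 1) (M : Matrix ι ι K) :
    trace (checkMap Q M) = trace M := by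
  have hconj : trace (Q * M * Q) = trace M := by
    rw [trace_mul_comm, ← mul_assoc, hQ, one_mul]
  rw [checkMap, trace_smul, trace_add, hconj, smul_eq_mul, ← two_mul,
    one_div_mul_eq_div, mul_div_cancel_left₀ _ two_ne_zero]

theorem commute_checkMap_self {Q : Matrix ι ι K} (hQ : Q * Q = 1) (M : Matrix ι ι K) :
    Commute (checkMap Q M) Q := by
  have hsum : Commute (Q * M * Q + M) Q := by
    rw [commute_iff_eq, add_mul, mul_add, mul_assoc (Q * M), hQ, mul_one, mul_assoc Q M Q,
      ← mul_assoc Q Q, hQ, one_mul, add_comm]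
  exact hsum.smul_left _

theorem trace_foldl_checkMap [NeZero (2 : K)] {L : List (Matrix ι ι K)} (hL : ∀ Q ∈ L, Q * Q = 1)
    (M : Matrix ι ι K) : trace (L.foldl (fun N Q => checkMap Q N) M) = trace M := by
  induction L generalizing M with
  | nil => rfl
  | cons Q L ih =>
    rw [List.forall_mem_cons] at hL
    rw [List.foldl_cons, ih hL.2, trace_checkMap hL.1]

theorem commute_foldl_checkMap {L : List (Matrix ι ι K)} {R M : Matrix ι ι K} (hR : R * R = 1)
    (hL : ∀ Q ∈ L, ∃ c : ℤˣ, SemiconjBy Q R (c • R)) (hM : R ∈ L ∨ Commute M R) :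
    Commute (L.foldl (fun N Q => checkMap Q N) M) R := by
  induction L generalizing M with
  | nil => simpa using hM
  | cons Q L ih =>
    rw [List.forall_mem_cons] at hL
    obtain ⟨⟨c, hQ⟩, hL⟩ := hL
    refine ih hL ?_
    rcases hM with hmem | hM
    · rcases List.mem_cons.mp hmem with rfl | hmem
      · exact .inr (commute_checkMap_self hR M)
      · exact .inl hmem
    · exact .inr (commute_checkMap hQ hM)

end CheckMap

section PiKronecker

variable {ι R : Type*} {m : ι → Type*} [Fintype ι] [CommSemiring R]

/-- The Kronecker product of a finite family of square matrices, indexed by dependent functions. -/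
def piKronecker (A : ∀ i, Matrix (m i) (m i) R) : Matrix (∀ i, m i) (∀ i, m i) R :=
  of fun f g => ∏ i, A i (f i) (g i)

theorem piKronecker_mul [DecidableEq ι] [∀ i, Fintype (m i)] (A B : ∀ i, Matrix (m i) (m i) R) :
    piKronecker A * piKronecker B = piKronecker (A * B) := by
  ext f g
  simp only [piKronecker, mul_apply, of_apply, Pi.mul_apply, Fintype.prod_sum,
    Finset.prod_mul_distrib]

theorem piKronecker_smul {S : Type*} [CommMonoid S] [MulAction S R] [IsScalarTower S R R]
    [SMulCommClass S R R] (c : ι → S) (A : ∀ i, Matrix (m i) (m i) R) :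
    piKronecker (fun i => c i • A i) = (∏ i, c i) • piKronecker A := by
  ext f g
  simp only [piKronecker, of_apply, Matrix.smul_apply, Finset.prod_smul]

variable [∀ i, DecidableEq (m i)] [DecidableEq (∀ i, m i)]

theorem piKronecker_diagonal (d : ∀ i, m i → R) :
    piKronecker (fun i => diagonal (d i)) = diagonal fun f => ∏ i, d i (f i) := by
  ext f g
  simp only [piKronecker, of_apply, diagonal_apply, Finset.prod_ite_zero, Finset.mem_univ,
    forall_const, funext_iff]

theorem piKronecker_permMatrix (σ : ∀ i, Equiv.Perm (m i)) :
    piKronecker (fun i => (σ i).permMatrix R) = Equiv.Perm.permMatrix R (Equiv.piCongrRight σ) := by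
  ext f g
  simp only [piKronecker, of_apply, PEquiv.toMatrix_toPEquiv_eq, submatrix_apply, one_apply, id,
    Finset.prod_ite_zero, Finset.mem_univ, forall_const, Finset.prod_const_one, funext_iff,
    Equiv.piCongrRight_apply, Pi.map_apply]

end PiKronecker

section Commutant

variable {ι R : Type*} [Fintype ι] [DecidableEq ι]

theorem apply_eq_zero_of_commute_diagonal [CommRing R] [NoZeroDivisors R] {M : Matrix ι ι R}
    {d : ι → R} (h : Commute M (diagonal d)) {i j : ι} (hij : d i ≠ d j) : M i j = 0 := by
  have hentry : M i j * d j = d i * M i j := by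
    rw [← mul_diagonal, ← diagonal_mul, h.eq]
  refine (mul_eq_zero.mp ?_).resolve_left (sub_ne_zero.mpr hij)
  rw [sub_mul, ← hentry, mul_comm, sub_self]

theorem apply_perm_of_commute_permMatrix [NonAssocSemiring R] {M : Matrix ι ι R}
    {σ : Equiv.Perm ι} (h : Commute M (σ.permMatrix R)) (i j : ι) : M (σ i) (σ j) = M i j := by
  simpa [PEquiv.mul_toMatrix_toPEquiv, PEquiv.toMatrix_toPEquiv_mul] using
    (congr_fun₂ h.eq i (σ j)).symm

end Commutant

theorem eq_of_forall_update_eq {ι β : Type*} {α : ι → Type*} [Finite ι] [DecidableEq ι]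
    {φ : (∀ i, α i) → β} (h : ∀ f i x, φ (Function.update f i x) = φ f) (f g : ∀ i, α i) :
    φ f = φ g := by
  cases nonempty_fintype ι
  have hpiecewise (s : Finset ι) : φ (s.piecewise f g) = φ g := by
    induction s using Finset.induction_on with
    | empty => rw [Finset.piecewise_empty]
    | insert i s _ ih => rw [Finset.piecewise_insert, h, ih]
  simpa using hpiecewise Finset.univ

section Pauli

theorem pauli_zero : pauli 0 = 1 := one_fin_two.symm

theorem pauli_one : pauli 1 = (Equiv.swap 0 1).permMatrix ℂ := by
  ext a b
  fin_cases a <;> fin_cases b <;> simp [pauli]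

theorem pauli_three : pauli 3 = diagonal ![1, -1] := by
  ext a b
  fin_cases a <;> fin_cases b <;> simp [pauli]

theorem pauli_mul_self (p : Fin 4) : pauli p * pauli p = 1 := by
  fin_cases p <;> simp [pauli, one_fin_two]

theorem exists_semiconjBy_pauli (p q : Fin 4) :
    ∃ c : ℤˣ, SemiconjBy (pauli p) (pauli q) (c • pauli q) := by
  by_cases h : p = 0 ∨ q = 0 ∨ p = q
  · refine ⟨1, ?_⟩
    rw [one_smul]
    rcases h with rfl | rfl | rfl
    · exact pauli_zero ▸ Commute.one_left _
    · exact pauli_zero ▸ Commute.one_right _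
    · exact Commute.refl _
  · refine ⟨-1, ?_⟩
    fin_cases p <;> fin_cases q <;> simp_all [pauli, SemiconjBy, Units.smul_def]

variable {n : ℕ}

theorem pauliString_eq_piKronecker (a : Fin n → Fin 4) :
    PauliString a = piKronecker fun i => pauli (a i) :=
  rfl

theorem pauliString_mul_self (a : Fin n → Fin 4) : PauliString a * PauliString a = 1 := by
  have hone : (fun i => pauli (a i)) * (fun i => pauli (a i)) = fun _ => diagonal 1 :=
    funext fun i => pauli_mul_self (a i)
  rw [pauliString_eq_piKronecker, piKronecker_mul, hone, piKronecker_diagonal]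
  simp

theorem exists_semiconjBy_pauliString (a b : Fin n → Fin 4) :
    ∃ c : ℤˣ, SemiconjBy (PauliString a) (PauliString b) (c • PauliString b) := by
  choose c hc using fun i => exists_semiconjBy_pauli (a i) (b i)
  refine ⟨∏ i, c i, ?_⟩
  simp only [pauliString_eq_piKronecker, ← piKronecker_smul, SemiconjBy, piKronecker_mul]
  exact congr_arg piKronecker (funext hc)

theorem pauliString_single_three (k : Fin n) :
    PauliString (Pi.single k 3) = diagonal fun f => ![1, -1] (f k) := by
  have hlocal (i : Fin n) :
      pauli ((Pi.single k 3 : Fin n → Fin 4) i) = diagonal (if i = k then ![1, -1] else 1) := by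
    obtain rfl | hik := eq_or_ne i k
    · simp [pauli_three]
    · simp [hik, pauli_zero]
  simp only [pauliString_eq_piKronecker, hlocal, piKronecker_diagonal]
  simp [ite_apply]

theorem pauliString_single_one (k : Fin n) :
    PauliString (Pi.single k 1) =
      Equiv.Perm.permMatrix ℂ (Equiv.piCongrRight (Pi.mulSingle k (Equiv.swap 0 1))) := by
  have hlocal (i : Fin n) :
      pauli ((Pi.single k 1 : Fin n → Fin 4) i) =
        ((Pi.mulSingle k (Equiv.swap 0 1) : Fin n → Equiv.Perm (Fin 2)) i).permMatrix ℂ := by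
    obtain rfl | hik := eq_or_ne i k
    · simp [pauli_one]
    · simp [hik, pauli_zero]
  simp only [pauliString_eq_piKronecker, hlocal, piKronecker_permMatrix]

variable {M : Matrix (Fin n → Fin 2) (Fin n → Fin 2) ℂ}

theorem apply_eq_zero_of_commute_pauliString_single_three {k : Fin n}
    (hZ : Commute M (PauliString (Pi.single k 3))) {f g : Fin n → Fin 2} (hfg : f k ≠ g k) :
    M f g = 0 := by
  have hinj : Function.Injective (![1, -1] : Fin 2 → ℂ) := by
    intro a b
    fin_cases a <;> fin_cases b <;> norm_num
  rw [pauliString_single_three] at hZ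
  exact apply_eq_zero_of_commute_diagonal hZ (hinj.ne hfg)

theorem apply_update_of_commute_pauliString_single_one {k : Fin n}
    (hX : Commute M (PauliString (Pi.single k 1))) (f : Fin n → Fin 2) (x : Fin 2) :
    M (Function.update f k x) (Function.update f k x) = M f f := by
  obtain rfl | hx := eq_or_ne x (f k)
  · rw [Function.update_eq_self]
  · have hflip :
        Function.update f k x = Equiv.piCongrRight (Pi.mulSingle k (Equiv.swap 0 1)) f := by
      funext i
      obtain rfl | hik := eq_or_ne i k
      · have hswap : ∀ a b : Fin 2, a ≠ b → a = Equiv.swap 0 1 b := by decide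
        simpa using hswap _ _ hx
      · simp [hik]
    rw [pauliString_single_one] at hX
    rw [hflip]
    exact apply_perm_of_commute_permMatrix hX f f

theorem eq_smul_one_of_commute_pauliString
    (hX : ∀ k, Commute M (PauliString (Pi.single k 1)))
    (hZ : ∀ k, Commute M (PauliString (Pi.single k 3))) :
    M = (trace M / (2 : ℂ) ^ n) • (1 : Matrix (Fin n → Fin 2) (Fin n → Fin 2) ℂ) := by
  have hdiag (f : Fin n → Fin 2) : M f f = M 0 0 :=
    eq_of_forall_update_eq (φ := fun f => M f f)
      (fun f k x => apply_update_of_commute_pauliString_single_one (hX k) f x) f 0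
  have htrace : trace M / (2 : ℂ) ^ n = M 0 0 := by
    simp [trace, hdiag]
  ext f g
  rw [htrace, Matrix.smul_apply, one_apply]
  obtain rfl | hfg := eq_or_ne f g
  · simp [hdiag f]
  · obtain ⟨k, hk⟩ := Function.ne_iff.mp hfg
    simp [hfg, apply_eq_zero_of_commute_pauliString_single_three (hZ k) hk]

end Pauli

theorem two_n_weight_one_checks_detect_all_errors_general {n : ℕ} {L : List (Fin n → Fin 4)}
    (hX : ∀ k, Pi.single k 1 ∈ L) (hZ : ∀ k, Pi.single k 3 ∈ L)
    (E : Matrix (Fin n → Fin 2) (Fin n → Fin 2) ℂ) :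
    L.foldl (fun M a => checkMap (PauliString a) M) E =
      (trace E / (2 : ℂ) ^ n) • (1 : Matrix (Fin n → Fin 2) (Fin n → Fin 2) ℂ) := by
  rw [← List.foldl_map (f := PauliString) (g := fun M Q => checkMap Q M)]
  have hcommute {a : Fin n → Fin 4} (ha : a ∈ L) :
      Commute ((L.map PauliString).foldl (fun M Q => checkMap Q M) E) (PauliString a) :=
    commute_foldl_checkMap (pauliString_mul_self a)
      (List.forall_mem_map.mpr fun b _ => exists_semiconjBy_pauliString b a)
      (.inl (List.mem_map_of_mem ha))
  have htrace : trace ((L.map PauliString).foldl (fun M Q => checkMap Q M) E) = trace E :=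
    trace_foldl_checkMap (List.forall_mem_map.mpr fun a _ => pauliString_mul_self a) E
  rw [← htrace]
  exact eq_smul_one_of_commute_pauliString (fun k => hcommute (hX k)) (fun k => hcommute (hZ k))

theorem two_n_weight_one_checks_detect_all_errors (n : ℕ)
    (E : Matrix (Fin n → Fin 2) (Fin n → Fin 2) ℂ) :
    (List.finRange n).foldl
        (fun M k =>
          ((1 : ℂ) / 2) •
            (PauliString (fun i : Fin n => if i = k then (3 : Fin 4) else 0) *
                (((1 : ℂ) / 2) •
                  (PauliString (fun i : Fin n => if i = k then (1 : Fin 4) else 0) * M *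
                      PauliString (fun i : Fin n => if i = k then (1 : Fin 4) else 0) +
                    M)) *
                PauliString (fun i : Fin n => if i = k then (3 : Fin 4) else 0) +
              ((1 : ℂ) / 2) •
                (PauliString (fun i : Fin n => if i = k then (1 : Fin 4) else 0) * M *
                    PauliString (fun i : Fin n => if i = k then (1 : Fin 4) else 0) +
                  M)))
        E =
      (Matrix.trace E / (2 : ℂ) ^ n) • (1 : Matrix (Fin n → Fin 2) (Fin n → Fin 2) ℂ) := by
  have hfold := two_n_weight_one_checks_detect_all_errors_general
    (L := (List.finRange n).flatMap fun k => [Pi.single k 1, Pi.single k 3])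
    (fun k => List.mem_flatMap.mpr ⟨k, List.mem_finRange k, by simp⟩)
    (fun k => List.mem_flatMap.mpr ⟨k, List.mem_finRange k, by simp⟩) E
  have hsingle (k : Fin n) (p : Fin 4) : Pi.single k p = fun i => if i = k then p else 0 :=
    funext fun i => Pi.single_apply k p i
  simpa only [List.foldl_flatMap, List.foldl_cons, List.foldl_nil, checkMap, hsingle] using hfold
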